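/- arXiv:1108.4257 — 4 statements merged into one kernel-verified Lean document; each statement's English description precedes it below -/
import Mathlib

section
/- Define the subspace coding capacity C_SS(H,T) = max over input PMFs p_X on F^{T×M} of I(⟨X⟩;⟨Y⟩), where Y = XH. For any input PMF p_X achieving C_SS(H,T), there exists an input PMF p'_X also achieving C_SS(H,T) such that p'_X induces the same distribution of the column space ⟨X⟩ as p_X, and the support of p'_X contains at most one matrix with any given column space (i.e., if p'_X(X) > 0, p'_X(X') > 0 and ⟨X⟩ = ⟨X'⟩ then X = X'). -/
open scoped Classical
open Finset Matrix Module

noncomputable section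

/-- χ_m[r] = (q^m − 1)(q^m − q)⋯(q^m − q^{r−1}), with χ_m[0] = 1. -/
def chi (q m r : ℕ) : ℕ := ∏ i ∈ Finset.range r, (q ^ m - q ^ i)

/-- χ̃_m[r] = χ_m[r] · q^{−mr}, as a real number. -/
def chiTilde (q m r : ℕ) : ℝ := (chi q m r : ℝ) / (q : ℝ) ^ (m * r)

/-- Gaussian binomial [m choose r]_q = χ_m[r]/χ_r[r], as a real number. -/
def gaussR (q m r : ℕ) : ℝ := (chi q m r : ℝ) / (chi q r r : ℝ)

variable {F : Type} [Field F] [Fintype F]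

/-- Column space of a matrix. -/
def colSpace {m n : ℕ} (A : Matrix (Fin m) (Fin n) F) : Submodule F (Fin m → F) :=
  LinearMap.range A.mulVecLin

/-- Row space of a matrix. -/
def rowSpace {m n : ℕ} (A : Matrix (Fin m) (Fin n) F) : Submodule F (Fin n → F) :=
  colSpace Aᵀ

/-- Pr{XH = Y} for a random transfer matrix H with PMF `pH`, input `X`, output `Y`. -/
def prXY {k M N : ℕ} (pH : Matrix (Fin M) (Fin N) F → ℝ)
    (X : Matrix (Fin k) (Fin M) F) (Y : Matrix (Fin k) (Fin N) F) : ℝ :=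
  ∑ Hm : Matrix (Fin M) (Fin N) F, if X * Hm = Y then pH Hm else 0

/-- A PMF on a finite type: nonnegative and summing to one. -/
def IsPMF {Ω : Type*} [Fintype Ω] (p : Ω → ℝ) : Prop :=
  (∀ x, 0 ≤ p x) ∧ ∑ x, p x = 1

/-- α-type distribution: matrices with the same row space are equiprobable. -/
def IsAlphaType {T M : ℕ} (p : Matrix (Fin T) (Fin M) F → ℝ) : Prop :=
  ∀ X X' : Matrix (Fin T) (Fin M) F, rowSpace X = rowSpace X' → p X = p X'

/-- Mutual information I(f;g) (base 2) between two functions of a finitely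
distributed random element with PMF `p`; terms of zero probability vanish. -/
def mutualInfo {Ω A B : Type*} [Fintype Ω] (p : Ω → ℝ) (f : Ω → A) (g : Ω → B) : ℝ :=
  ∑ ω : Ω, p ω * Real.logb 2
    ((∑ ω' : Ω, if f ω' = f ω ∧ g ω' = g ω then p ω' else 0) /
      ((∑ ω' : Ω, if f ω' = f ω then p ω' else 0) *
        (∑ ω' : Ω, if g ω' = g ω then p ω' else 0)))

/-- Joint PMF of the input X and the independent transfer matrix H;
the channel output is Y = XH, i.e., `ω.1 * ω.2`. -/
def jointPMF {T M N : ℕ} (pX : Matrix (Fin T) (Fin M) F → ℝ)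
    (pH : Matrix (Fin M) (Fin N) F → ℝ) :
    Matrix (Fin T) (Fin M) F × Matrix (Fin M) (Fin N) F → ℝ :=
  fun ω => pX ω.1 * pH ω.2

/-- I(X;Y) for the LOC with input PMF `pX` and transfer PMF `pH`. -/
def miXY {T M N : ℕ} (pX : Matrix (Fin T) (Fin M) F → ℝ)
    (pH : Matrix (Fin M) (Fin N) F → ℝ) : ℝ :=
  mutualInfo (jointPMF pX pH) (fun ω => ω.1) (fun ω => ω.1 * ω.2)

/-- I(⟨X⟩;⟨Y⟩), mutual information between the column spaces. -/
def miColCol {T M N : ℕ} (pX : Matrix (Fin T) (Fin M) F → ℝ)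
    (pH : Matrix (Fin M) (Fin N) F → ℝ) : ℝ :=
  mutualInfo (jointPMF pX pH) (fun ω => colSpace ω.1) (fun ω => colSpace (ω.1 * ω.2))

/-- I(⟨X^T⟩;⟨Y^T⟩), mutual information between the row spaces. -/
def miRowRow {T M N : ℕ} (pX : Matrix (Fin T) (Fin M) F → ℝ)
    (pH : Matrix (Fin M) (Fin N) F → ℝ) : ℝ :=
  mutualInfo (jointPMF pX pH) (fun ω => rowSpace ω.1) (fun ω => rowSpace (ω.1 * ω.2))

/-- I(rank(X);rank(Y)). -/
def miRankRank {T M N : ℕ} (pX : Matrix (Fin T) (Fin M) F → ℝ)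
    (pH : Matrix (Fin M) (Fin N) F → ℝ) : ℝ :=
  mutualInfo (jointPMF pX pH) (fun ω => ω.1.rank) (fun ω => (ω.1 * ω.2).rank)

/-- Pr{rank(X) = r}. -/
def prRankX {T M : ℕ} (pX : Matrix (Fin T) (Fin M) F → ℝ) (r : ℕ) : ℝ :=
  ∑ x : Matrix (Fin T) (Fin M) F, if x.rank = r then pX x else 0

/-- Pr{rank(X) = r, rank(Y) = s} where Y = XH. -/
def prRankXY {T M N : ℕ} (pX : Matrix (Fin T) (Fin M) F → ℝ)
    (pH : Matrix (Fin M) (Fin N) F → ℝ) (r s : ℕ) : ℝ :=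
  ∑ ω : Matrix (Fin T) (Fin M) F × Matrix (Fin M) (Fin N) F,
    if ω.1.rank = r ∧ (ω.1 * ω.2).rank = s then jointPMF pX pH ω else 0

/-- J(rank(X);rank(Y)) = ∑_{r,s} Pr{rank X = r, rank Y = s} · log₂(χ_T[s]/χ_r[s]). -/
def Jrank (q : ℕ) {T M N : ℕ} (pX : Matrix (Fin T) (Fin M) F → ℝ)
    (pH : Matrix (Fin M) (Fin N) F → ℝ) : ℝ :=
  ∑ r ∈ Finset.range (T + 1), ∑ s ∈ Finset.range (T + 1),
    prRankXY pX pH r s * Real.logb 2 ((chi q T s : ℝ) / (chi q r s : ℝ))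

/-- Row-space-symmetric LOC: the transition probability P(Y|X) for ⟨Y⟩ ⊆ ⟨X⟩
is determined by the row spaces of the input and output matrices. -/
def RowSpaceSymmetric (T : ℕ) {M N : ℕ} (pH : Matrix (Fin M) (Fin N) F → ℝ) : Prop :=
  ∀ (X X' : Matrix (Fin T) (Fin M) F) (Y Y' : Matrix (Fin T) (Fin N) F),
    colSpace Y ≤ colSpace X → colSpace Y' ≤ colSpace X' →
    rowSpace X = rowSpace X' → rowSpace Y = rowSpace Y' →
    prXY pH X Y = prXY pH X' Y'

/-- Pr{⟨XH⟩ = V} for a fixed input matrix X. -/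
def prColY (T : ℕ) {M N : ℕ} (pH : Matrix (Fin M) (Fin N) F → ℝ)
    (X : Matrix (Fin T) (Fin M) F) (V : Submodule F (Fin T → F)) : ℝ :=
  ∑ Hm : Matrix (Fin M) (Fin N) F, if colSpace (X * Hm) = V then pH Hm else 0

/-- Unique subspace degradation: Pr{⟨XH⟩ = V} is the same for all inputs X
with the same column space. -/
def UniqueSubspaceDegradation (T : ℕ) {M N : ℕ}
    (pH : Matrix (Fin M) (Fin N) F → ℝ) : Prop :=
  ∀ (V : Submodule F (Fin T → F)) (X X' : Matrix (Fin T) (Fin M) F),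
    colSpace X = colSpace X' → prColY T pH X V = prColY T pH X' V

/-- Rank-symmetric LOC: P(Y|X) = μ(rank X, rank Y) when ⟨Y⟩ ⊆ ⟨X⟩, and 0 otherwise. -/
def RankSymmetric (T : ℕ) {M N : ℕ} (pH : Matrix (Fin M) (Fin N) F → ℝ) : Prop :=
  ∃ μ : ℕ → ℕ → ℝ, (∀ a b, 0 ≤ μ a b ∧ μ a b ≤ 1) ∧
    ∀ (X : Matrix (Fin T) (Fin M) F) (Y : Matrix (Fin T) (Fin N) F),
      prXY pH X Y = if colSpace Y ≤ colSpace X then μ X.rank Y.rank else 0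

/-- rank*(H) = max{r : Pr{rank H = r} > 0}. -/
def rankStar {M N : ℕ} (pH : Matrix (Fin M) (Fin N) F → ℝ) : ℕ :=
  sSup {r : ℕ | 0 < ∑ Hm : Matrix (Fin M) (Fin N) F, if Hm.rank = r then pH Hm else 0}

/-!
For a fixed law of `f`, mutual information is convex in the conditional law of `g`, so it lies above
its tangent plane at `p`, whose slope is the information density of `p`. Along this plane one may
move the mass of each fibre of the input labelling onto a single point of that fibre, one that
maximises the expected information density: the linear functional does not decrease, hence neither
does the mutual information, and the law of the label is unchanged.
-/

/-- The law of `f` when the sample point has weights `p`, as a weight function on the codomain. -/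
def marginal {Ω A : Type*} [Fintype Ω] (p : Ω → ℝ) (f : Ω → A) (a : A) : ℝ :=
  ∑ ω, if f ω = a then p ω else 0

/-- The information density `log₂ (P(a, b) / (P(a) P(b)))` of the pair `(f, g)` under `p`; its
expectation is the mutual information. -/
def infoDensity {Ω A B : Type*} [Fintype Ω] (p : Ω → ℝ) (f : Ω → A) (g : Ω → B)
    (a : A) (b : B) : ℝ :=
  Real.logb 2 (marginal p (fun ω => (f ω, g ω)) (a, b) / (marginal p f a * marginal p g b))

/-- The joint law of the input and the output of a channel with transition probabilities
`W x y = P(y | x)`, for an input with law `p`. -/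
def channelJoint {α β : Type*} (p : α → ℝ) (W : α → β → ℝ) (ω : α × β) : ℝ :=
  p ω.1 * W ω.1 ω.2

/-- The expected information density between the label `f` of the input and the label `g` of the
input-output pair, given that the input is `x`: the slope of the tangent plane in the direction
of the input `x`. -/
def inputInfoDensity {α β A B : Type*} [Fintype α] [Fintype β] (p : α → ℝ) (W : α → β → ℝ)
    (f : α → A) (g : α × β → B) (x : α) : ℝ :=
  ∑ y, W x y * infoDensity (channelJoint p W) (fun ω => f ω.1) g (f x) (g (x, y))

section Marginal

variable {Ω A B : Type*} [Fintype Ω]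

lemma marginal_nonneg {p : Ω → ℝ} (hp : ∀ ω, 0 ≤ p ω) (f : Ω → A) (a : A) :
    0 ≤ marginal p f a :=
  sum_nonneg fun ω _ => ite_nonneg (hp ω) le_rfl

lemma marginal_pos {p : Ω → ℝ} (hp : ∀ ω, 0 ≤ p ω) (f : Ω → A) {ω : Ω} (hω : 0 < p ω) :
    0 < marginal p f (f ω) :=
  sum_pos' (fun ω' _ => ite_nonneg (hp ω') le_rfl) ⟨ω, mem_univ ω, by simpa using hω⟩

lemma exists_pos_of_marginal_pos {p : Ω → ℝ} {f : Ω → A} {a : A} (ha : 0 < marginal p f a) :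
    ∃ ω, f ω = a ∧ 0 < p ω := by
  by_contra! h
  refine ha.not_ge (sum_nonpos fun ω _ => ?_)
  split_ifs with hω
  exacts [h ω hω, le_rfl]

lemma marginal_congr {p : Ω → ℝ} {f g : Ω → A} (h : ∀ ω, p ω ≠ 0 → f ω = g ω) :
    marginal p f = marginal p g := by
  ext a
  refine sum_congr rfl fun ω _ => ?_
  by_cases hω : p ω = 0
  · simp [hω]
  · rw [h ω hω]

lemma marginal_mul_comp (p : Ω → ℝ) (f : Ω → A) (φ : A → ℝ) (a : A) :
    marginal (fun ω => p ω * φ (f ω)) f a = marginal p f a * φ a := by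
  simp only [marginal, sum_mul, ite_mul, zero_mul]
  refine sum_congr rfl fun ω _ => ?_
  split_ifs with h
  · rw [h]
  · rfl

lemma sum_marginal_mul [Fintype A] (p : Ω → ℝ) (f : Ω → A) (φ : A → ℝ) :
    ∑ a, marginal p f a * φ a = ∑ ω, p ω * φ (f ω) := by
  simp only [marginal, sum_mul, ite_mul, zero_mul]
  rw [sum_comm]
  simp

lemma marginal_marginal [Fintype A] (p : Ω → ℝ) (f : Ω → A) (g : A → B) :
    marginal (marginal p f) g = marginal p (g ∘ f) := by
  ext b
  simpa [marginal] using sum_marginal_mul p f fun a => if g a = b then 1 else 0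

lemma IsPMF.marginal [Fintype A] {p : Ω → ℝ} (hp : IsPMF p) (f : Ω → A) :
    IsPMF (marginal p f) :=
  ⟨marginal_nonneg hp.1 f, by simpa [hp.2] using sum_marginal_mul p f fun _ => 1⟩

lemma sum_mul_marginal_comm (p r : Ω → ℝ) (f : Ω → A) :
    ∑ ω, p ω * marginal r f (f ω) = ∑ ω, r ω * marginal p f (f ω) := by
  simp only [marginal, mul_sum, mul_ite, mul_zero]
  rw [sum_comm]
  simp only [eq_comm, mul_comm]

/-- Inequality rather than equality because the fibres on which `p` vanishes contribute nothing
to the left-hand side. -/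
lemma sum_mul_marginal_div_marginal_le (p : Ω → ℝ) {r : Ω → ℝ} (hr : ∀ ω, 0 ≤ r ω)
    (f : Ω → A) :
    ∑ ω, p ω * (marginal r f (f ω) / marginal p f (f ω)) ≤ ∑ ω, r ω := by
  calc ∑ ω, p ω * (marginal r f (f ω) / marginal p f (f ω))
      = ∑ ω, p ω * (marginal p f (f ω))⁻¹ * marginal r f (f ω) := by
        simp only [div_eq_inv_mul, mul_assoc]
    _ = ∑ ω, r ω * (marginal p f (f ω) * (marginal p f (f ω))⁻¹) := by
        rw [sum_mul_marginal_comm]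
        simp only [marginal_mul_comp p f fun a => (marginal p f a)⁻¹]
    _ ≤ ∑ ω, r ω := sum_le_sum fun ω _ => mul_le_of_le_one_right (hr ω) mul_inv_le_one

end Marginal

section Information

variable {Ω A B : Type*} [Fintype Ω]

lemma mutualInfo_eq_sum_infoDensity (p : Ω → ℝ) (f : Ω → A) (g : Ω → B) :
    mutualInfo p f g = ∑ ω, p ω * infoDensity p f g (f ω) (g ω) := by
  simp only [mutualInfo, infoDensity, marginal, Prod.mk.injEq]

lemma sum_mul_logb_marginal_div_marginal_nonneg {b : ℝ} (hb : 1 < b) {p r : Ω → ℝ}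
    (hp : ∀ ω, 0 ≤ p ω) (hr : ∀ ω, 0 ≤ r ω) (hpr : ∀ ω, 0 < p ω → 0 < r ω)
    (hsum : ∑ ω, r ω ≤ ∑ ω, p ω) (f : Ω → A) :
    0 ≤ ∑ ω, p ω * Real.logb b (marginal p f (f ω) / marginal r f (f ω)) := by
  have log_ge (ω : Ω) : p ω - p ω * (marginal r f (f ω) / marginal p f (f ω)) ≤
      p ω * Real.log (marginal p f (f ω) / marginal r f (f ω)) := by
    rcases (hp ω).eq_or_lt with h0 | hpos
    · simp [← h0]
    have := Real.one_sub_inv_le_log_of_pos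
      (div_pos (marginal_pos hp f hpos) (marginal_pos hr f (hpr ω hpos)))
    rw [inv_div] at this
    simpa only [mul_sub, mul_one] using mul_le_mul_of_nonneg_left this hpos.le
  have sum_log_nonneg : 0 ≤ ∑ ω, p ω * Real.log (marginal p f (f ω) / marginal r f (f ω)) := by
    refine le_trans ?_ (sum_le_sum fun ω _ => log_ge ω)
    rw [sum_sub_distrib]
    exact sub_nonneg.2 ((sum_mul_marginal_div_marginal_le p hr f).trans hsum)
  simp only [Real.logb, ← mul_div_assoc, ← sum_div]
  exact div_nonneg sum_log_nonneg (Real.log_pos hb).le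

lemma infoDensity_sub_infoDensity {p p' : Ω → ℝ} (hp : ∀ ω, 0 ≤ p ω) (hp' : ∀ ω, 0 ≤ p' ω)
    {f : Ω → A} (g : Ω → B) (hf : marginal p' f = marginal p f) {ω : Ω}
    (hω : 0 < p ω) (hω' : 0 < p' ω) :
    infoDensity p' f g (f ω) (g ω) - infoDensity p f g (f ω) (g ω) =
      Real.logb 2 (marginal p' (fun ω => (f ω, g ω)) (f ω, g ω) /
        (marginal p (fun ω => (f ω, g ω)) (f ω, g ω) *
          (marginal p' g (g ω) / marginal p g (g ω)))) := by
  have hm := marginal_pos hp f hω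
  have hg := marginal_pos hp g hω
  have hg' := marginal_pos hp' g hω'
  have hfg := marginal_pos hp (fun ω => (f ω, g ω)) hω
  have hfg' := marginal_pos hp' (fun ω => (f ω, g ω)) hω'
  rw [infoDensity, infoDensity, hf, ← Real.logb_div (by positivity) (by positivity)]
  congr 1
  field_simp

/-- The tangent plane inequality. The reference weight `r` has the conditional law of `f` given `g`
under `p` and the law of `g` under `p'`; Gibbs' inequality compares the law of `(f, g)` under `p'`
with the one under `r`. -/
lemma sum_mul_infoDensity_le_mutualInfo {p p' : Ω → ℝ} (hp : ∀ ω, 0 ≤ p ω)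
    (hp' : ∀ ω, 0 ≤ p' ω) (hpp' : ∀ ω, 0 < p' ω → 0 < p ω) {f : Ω → A} (g : Ω → B)
    (hf : marginal p' f = marginal p f) :
    ∑ ω, p' ω * infoDensity p f g (f ω) (g ω) ≤ mutualInfo p' f g := by
  let r (ω : Ω) : ℝ := p ω * (marginal p' g (g ω) / marginal p g (g ω))
  have r_nonneg (ω : Ω) : 0 ≤ r ω :=
    mul_nonneg (hp ω) (div_nonneg (marginal_nonneg hp' g _) (marginal_nonneg hp g _))
  have r_pos (ω : Ω) (hω : 0 < p' ω) : 0 < r ω :=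
    mul_pos (hpp' ω hω) (div_pos (marginal_pos hp' g hω) (marginal_pos hp g (hpp' ω hω)))
  have marginal_r (ω : Ω) : marginal r (fun ω => (f ω, g ω)) (f ω, g ω) =
      marginal p (fun ω => (f ω, g ω)) (f ω, g ω) * (marginal p' g (g ω) / marginal p g (g ω)) :=
    marginal_mul_comp p (fun ω => (f ω, g ω))
      (fun v => marginal p' g v.2 / marginal p g v.2) (f ω, g ω)
  have gibbs := sum_mul_logb_marginal_div_marginal_nonneg one_lt_two hp' r_nonneg r_pos
    (sum_mul_marginal_div_marginal_le p hp' g) fun ω => (f ω, g ω)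
  rw [mutualInfo_eq_sum_infoDensity, ← sub_nonneg, ← sum_sub_distrib]
  refine gibbs.trans_eq (sum_congr rfl fun ω _ => ?_)
  rcases (hp' ω).eq_or_lt with h0 | hω
  · simp [← h0]
  · rw [← mul_sub, infoDensity_sub_infoDensity hp hp' g hf (hpp' ω hω) hω, marginal_r]

end Information

section Channel

variable {α β A B : Type*} [Fintype α] [Fintype β]

lemma sum_channelJoint_mul (p : α → ℝ) (W : α → β → ℝ) (φ : α × β → ℝ) :
    ∑ ω, channelJoint p W ω * φ ω = ∑ x, p x * ∑ y, W x y * φ (x, y) := by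
  simp only [Fintype.sum_prod_type, channelJoint, mul_sum, mul_assoc]

lemma marginal_channelJoint_fst (p : α → ℝ) {W : α → β → ℝ} (hW : ∀ x, ∑ y, W x y = 1)
    (f : α → A) : marginal (channelJoint p W) (fun ω => f ω.1) = marginal p f := by
  ext a
  simpa [marginal, ← sum_mul, hW] using
    sum_channelJoint_mul p W fun ω => if f ω.1 = a then 1 else 0

lemma mutualInfo_channelJoint (p : α → ℝ) (W : α → β → ℝ) (f : α → A) (g : α × β → B) :
    mutualInfo (channelJoint p W) (fun ω => f ω.1) g = ∑ x, p x * inputInfoDensity p W f g x := by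
  rw [mutualInfo_eq_sum_infoDensity, sum_channelJoint_mul]
  rfl

lemma sum_mul_inputInfoDensity_le_mutualInfo {p p' : α → ℝ} (hp : ∀ x, 0 ≤ p x)
    (hp' : ∀ x, 0 ≤ p' x) (hpp' : ∀ x, 0 < p' x → 0 < p x) {W : α → β → ℝ}
    (hW : ∀ x, IsPMF (W x)) {f : α → A} (g : α × β → B) (hf : marginal p' f = marginal p f) :
    ∑ x, p' x * inputInfoDensity p W f g x ≤
      mutualInfo (channelJoint p' W) (fun ω => f ω.1) g := by
  have joint_nonneg {q : α → ℝ} (hq : ∀ x, 0 ≤ q x) (ω : α × β) : 0 ≤ channelJoint q W ω :=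
    mul_nonneg (hq _) ((hW _).1 _)
  have joint_pos (ω : α × β) (hω : 0 < channelJoint p' W ω) : 0 < channelJoint p W ω :=
    mul_pos (hpp' _ (pos_of_mul_pos_left hω ((hW _).1 _))) (pos_of_mul_pos_right hω (hp' _))
  have marginal_eq : marginal (channelJoint p' W) (fun ω => f ω.1) =
      marginal (channelJoint p W) fun ω => f ω.1 := by
    simp only [marginal_channelJoint_fst _ fun x => (hW x).2, hf]
  have tangent := sum_mul_infoDensity_le_mutualInfo (joint_nonneg hp) (joint_nonneg hp')
    joint_pos g marginal_eq
  rwa [sum_channelJoint_mul] at tangent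

end Channel

lemma exists_fiberwise_argmax {α A R : Type*} [Nonempty α] [LinearOrder R] (S : Finset α)
    (f : α → A) (c : α → R) :
    ∃ s : A → α, ∀ x ∈ S, s (f x) ∈ S ∧ f (s (f x)) = f x ∧ c x ≤ c (s (f x)) := by
  have argmax (a : A) : ∃ m, ∀ x ∈ S, f x = a → m ∈ S ∧ f m = a ∧ c x ≤ c m := by
    rcases (S.filter (f · = a)).eq_empty_or_nonempty with hempty | hne
    · exact ⟨Classical.arbitrary α, fun x hx hxa => (filter_eq_empty_iff.1 hempty hx hxa).elim⟩
    · obtain ⟨m, hm, hmax⟩ := exists_max_image _ c hne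
      obtain ⟨hmS, hma⟩ := mem_filter.1 hm
      exact ⟨m, fun x hx hxa => ⟨hmS, hma, hmax x (mem_filter.2 ⟨hx, hxa⟩)⟩⟩
  choose s hs using argmax
  exact ⟨s, fun x hx => hs (f x) x hx rfl⟩

theorem subspace_capacity_deterministic_lift_general {α β A B : Type*} [Fintype α] [Fintype β]
    {p : α → ℝ} (hp : IsPMF p) {W : α → β → ℝ} (hW : ∀ x, IsPMF (W x))
    (f : α → A) (g : α × β → B) :
    ∃ p' : α → ℝ, IsPMF p' ∧
      mutualInfo (channelJoint p W) (fun ω => f ω.1) g ≤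
        mutualInfo (channelJoint p' W) (fun ω => f ω.1) g ∧
      marginal p' f = marginal p f ∧ {x | 0 < p' x}.InjOn f := by
  have : Nonempty α := not_isEmpty_iff.1 fun _ => by simpa using hp.2
  obtain ⟨s, hs⟩ := exists_fiberwise_argmax {x | 0 < p x} f (inputInfoDensity p W f g)
  simp only [mem_filter_univ] at hs
  let p' : α → ℝ := marginal p (s ∘ f)
  have pmf' : IsPMF p' := hp.marginal _
  have support' {x : α} (hx : 0 < p' x) : s (f x) = x ∧ 0 < p x := by
    obtain ⟨y, rfl, hy⟩ := exists_pos_of_marginal_pos hx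
    obtain ⟨hpos, hf, -⟩ := hs y hy
    exact ⟨congrArg s hf, hpos⟩
  have marginal_f : marginal p' f = marginal p f :=
    (marginal_marginal p (s ∘ f) f).trans <| marginal_congr fun y hy =>
      (hs y ((hp.1 y).lt_of_ne' hy)).2.1
  refine ⟨p', pmf', ?_, marginal_f, fun x hx x' hx' h => ?_⟩
  · calc mutualInfo (channelJoint p W) (fun ω => f ω.1) g
        = ∑ x, p x * inputInfoDensity p W f g x := mutualInfo_channelJoint p W f g
      _ ≤ ∑ x, p x * inputInfoDensity p W f g (s (f x)) := sum_le_sum fun x _ => by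
          rcases (hp.1 x).eq_or_lt with h0 | hx
          · simp [← h0]
          · exact mul_le_mul_of_nonneg_left (hs x hx).2.2 hx.le
      _ = ∑ x, p' x * inputInfoDensity p W f g x := (sum_marginal_mul p (s ∘ f) _).symm
      _ ≤ mutualInfo (channelJoint p' W) (fun ω => f ω.1) g :=
          sum_mul_inputInfoDensity_le_mutualInfo hp.1 pmf'.1 (fun x hx => (support' hx).2) hW g
            marginal_f
  · rw [← (support' hx).1, ← (support' hx').1, h]

/-- any maximizer of I(⟨X⟩;⟨Y⟩) can be replaced by a maximizer
inducing the same column-space distribution whose support contains at most one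
matrix with any given column space. -/
theorem subspace_capacity_deterministic_lift
    {F : Type} [Field F] [Fintype F] (T M N : ℕ)
    (pH : Matrix (Fin M) (Fin N) F → ℝ) (hpH : IsPMF pH)
    (pX : Matrix (Fin T) (Fin M) F → ℝ) (hpX : IsPMF pX)
    (hmax : ∀ p : Matrix (Fin T) (Fin M) F → ℝ, IsPMF p →
      miColCol p pH ≤ miColCol pX pH) :
    ∃ pX' : Matrix (Fin T) (Fin M) F → ℝ, IsPMF pX' ∧
      (∀ p : Matrix (Fin T) (Fin M) F → ℝ, IsPMF p →
        miColCol p pH ≤ miColCol pX' pH) ∧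
      (∀ U : Submodule F (Fin T → F),
        (∑ x : Matrix (Fin T) (Fin M) F, if colSpace x = U then pX' x else 0)
          = ∑ x : Matrix (Fin T) (Fin M) F, if colSpace x = U then pX x else 0) ∧
      (∀ x x' : Matrix (Fin T) (Fin M) F,
        0 < pX' x → 0 < pX' x' → colSpace x = colSpace x' → x = x') := by
  obtain ⟨pX', hpX', hle, hmarg, hinj⟩ := subspace_capacity_deterministic_lift_general hpX
    (fun _ => hpH) colSpace fun ω => colSpace (ω.1 * ω.2)
  exact ⟨pX', hpX', fun p hp => (hmax p hp).trans hle, congrFun hmarg,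
    fun x x' hx hx' h => hinj hx hx' h⟩

end
end

section
/- If T ≥ M and LOC(H,T) is row-space symmetric, then LOC(H,T) has a unique subspace degradation; that is, for every subspace V of F^T and all X, X' ∈ F^{T×M} with ⟨X⟩ = ⟨X'⟩, Pr{⟨XH⟩ = V} = Pr{⟨X'H⟩ = V}. -/
open scoped Classical
open Finset Matrix Module

noncomputable section

variable {F : Type} [Field F] [Fintype F]

/-! Let `p` be the PMF of `H`. A left-invertible input `E`, available since `M ≤ T`, lets the
receiver recover `H` from `EH`: `Pr{EH = EK} = p(K)`. As left multiplication by `E` preserves row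
spaces, row-space symmetry forces `p` to be constant on matrices with a common row space. Two inputs
with the same column space differ by an invertible right factor, `X₂ = X₁G`, and `GH` has the same
row space as `H`. Hence `GH` has the same law as `H`, and `X₂H = X₁(GH)` has the same law as `X₁H`.
-/

section Range

variable {K V W : Type*} [DivisionRing K] [AddCommGroup V] [Module K V] [AddCommGroup W]
  [Module K W] {f g : V →ₗ[K] W} [FiniteDimensional K (LinearMap.range f)]

theorem rank_ker_eq_of_range_eq (h : LinearMap.range f = LinearMap.range g) :
    Module.rank K (LinearMap.ker f) = Module.rank K (LinearMap.ker g) := by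
  have rank_quotient_eq :
      Module.rank K (V ⧸ LinearMap.ker f) = Module.rank K (V ⧸ LinearMap.ker g) :=
    (f.quotKerEquivRange ≪≫ₗ LinearEquiv.ofEq _ _ h ≪≫ₗ g.quotKerEquivRange.symm).rank_eq
  have : FiniteDimensional K (V ⧸ LinearMap.ker f) := Module.Finite.equiv f.quotKerEquivRange.symm
  refine Cardinal.eq_of_add_eq_add_left ?_ (Module.rank_lt_aleph0 K (V ⧸ LinearMap.ker f))
  rw [Submodule.rank_quotient_add_rank, rank_quotient_eq, Submodule.rank_quotient_add_rank]

theorem exists_linearEquiv_comp_eq_of_range_eq (h : LinearMap.range f = LinearMap.range g) :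
    ∃ e : V ≃ₗ[K] V, f ∘ₗ e = g := by
  obtain ⟨C, hC⟩ := (LinearMap.ker f).exists_isCompl
  obtain ⟨D, hD⟩ := (LinearMap.ker g).exists_isCompl
  obtain ⟨kerEquiv⟩ := Module.nonempty_linearEquiv_iff_rank_eq.mpr (rank_ker_eq_of_range_eq h).symm
  let complEquiv : D ≃ₗ[K] C := g.kerComplementEquivRange hD.symm ≪≫ₗ
    LinearEquiv.ofEq _ _ h.symm ≪≫ₗ (f.kerComplementEquivRange hC.symm).symm
  have apply_complEquiv (d : D) : f (complEquiv d) = g d :=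
    congrArg Subtype.val ((f.kerComplementEquivRange hC.symm).apply_symm_apply _)
  refine ⟨(Submodule.prodEquivOfIsCompl _ _ hD).symm ≪≫ₗ kerEquiv.prodCongr complEquiv ≪≫ₗ
    Submodule.prodEquivOfIsCompl _ _ hC, LinearMap.ext fun v => ?_⟩
  obtain ⟨⟨k, d⟩, rfl⟩ := (Submodule.prodEquivOfIsCompl _ _ hD).surjective v
  simp [apply_complEquiv]

end Range

section MatrixSpaces

theorem one_submatrix_mul_one_submatrix {R m n : Type*} [NonAssocSemiring R]
    [Fintype m] [DecidableEq m] [DecidableEq n] {f : n → m} (hf : Function.Injective f) :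
    (1 : Matrix m m R).submatrix f id * (1 : Matrix m m R).submatrix id f = 1 := by
  rw [← Matrix.submatrix_mul _ _ f id f Function.bijective_id, Matrix.one_mul,
    Matrix.submatrix_one f hf]

variable {K : Type} [Field K] {k m n : ℕ}

theorem exists_mul_gl_eq_of_colSpace_eq {A B : Matrix (Fin m) (Fin n) K}
    (h : colSpace A = colSpace B) : ∃ G : GL (Fin n) K, A * G.val = B := by
  obtain ⟨e, he⟩ := exists_linearEquiv_comp_eq_of_range_eq h
  obtain ⟨G, hG⟩ := Matrix.GeneralLinearGroup.toLin.surjective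
    (LinearMap.GeneralLinearGroup.ofLinearEquiv e)
  have mulVecLin_eq : G.val.mulVecLin = e := congrArg Units.val hG
  refine ⟨G, Matrix.toLin'.injective ?_⟩
  rw [Matrix.toLin'_apply', Matrix.toLin'_apply', Matrix.mulVecLin_mul, mulVecLin_eq, he]

theorem colSpace_mul_le (A : Matrix (Fin k) (Fin m) K) (B : Matrix (Fin m) (Fin n) K) :
    colSpace (A * B) ≤ colSpace A := by
  rw [colSpace, Matrix.mulVecLin_mul]
  exact LinearMap.range_comp_le_range _ _

theorem colSpace_mul_of_mul_eq_one (A : Matrix (Fin k) (Fin m) K) {B : Matrix (Fin m) (Fin n) K}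
    {R : Matrix (Fin n) (Fin m) K} (h : B * R = 1) : colSpace (A * B) = colSpace A := by
  refine (colSpace_mul_le A B).antisymm ?_
  calc colSpace A = colSpace (A * B * R) := by rw [Matrix.mul_assoc, h, Matrix.mul_one]
    _ ≤ colSpace (A * B) := colSpace_mul_le _ R

theorem rowSpace_mul_of_mul_eq_one {A : Matrix (Fin k) (Fin m) K} {L : Matrix (Fin m) (Fin k) K}
    (h : L * A = 1) (B : Matrix (Fin m) (Fin n) K) : rowSpace (A * B) = rowSpace B := by
  rw [rowSpace, Matrix.transpose_mul]
  exact colSpace_mul_of_mul_eq_one Bᵀ (by rw [← Matrix.transpose_mul, h, Matrix.transpose_one])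

theorem IsAlphaType.apply_gl_mul {p : Matrix (Fin m) (Fin n) K → ℝ} (hp : IsAlphaType p)
    (G : GL (Fin m) K) (A : Matrix (Fin m) (Fin n) K) : p (G.val * A) = p A :=
  hp _ _ (rowSpace_mul_of_mul_eq_one G.inv_mul A)

end MatrixSpaces

section Channel

variable {T M N : ℕ} {pH : Matrix (Fin M) (Fin N) F → ℝ}

theorem prXY_mul_of_mul_eq_one {E : Matrix (Fin T) (Fin M) F} {L : Matrix (Fin M) (Fin T) F}
    (h : L * E = 1) (A : Matrix (Fin M) (Fin N) F) : prXY pH E (E * A) = pH A := by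
  have cancel (B : Matrix (Fin M) (Fin N) F) : E * B = E * A ↔ B = A :=
    (Matrix.mul_right_injective_of_inv L E h).eq_iff
  simp only [prXY, cancel, Finset.sum_ite_eq', Finset.mem_univ, if_true]

theorem RowSpaceSymmetric.isAlphaType (hsymm : RowSpaceSymmetric T pH) (hTM : M ≤ T) :
    IsAlphaType pH := by
  intro A B hAB
  obtain ⟨E, L, hLE⟩ : ∃ (E : Matrix (Fin T) (Fin M) F) (L : Matrix (Fin M) (Fin T) F),
      L * E = 1 := ⟨_, _, one_submatrix_mul_one_submatrix (Fin.castLE_injective hTM)⟩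
  have rowSpace_eq : rowSpace (E * A) = rowSpace (E * B) := by
    simpa only [rowSpace_mul_of_mul_eq_one hLE] using hAB
  calc pH A = prXY pH E (E * A) := (prXY_mul_of_mul_eq_one hLE A).symm
    _ = prXY pH E (E * B) :=
      hsymm E E _ _ (colSpace_mul_le E A) (colSpace_mul_le E B) rfl rowSpace_eq
    _ = pH B := prXY_mul_of_mul_eq_one hLE B

theorem IsAlphaType.prColY_mul_gl (hα : IsAlphaType pH) (X : Matrix (Fin T) (Fin M) F)
    (G : GL (Fin M) F) (V : Submodule F (Fin T → F)) :
    prColY T pH (X * G.val) V = prColY T pH X V := by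
  have bijective_mul : Function.Bijective fun A : Matrix (Fin M) (Fin N) F => G.val * A :=
    (Matrix.mul_right_injective_of_inv _ _ G.inv_mul).bijective_of_finite
  calc prColY T pH (X * G.val) V
      = ∑ A, if colSpace (X * (G.val * A)) = V then pH (G.val * A) else 0 := by
        simp only [prColY, Matrix.mul_assoc, hα.apply_gl_mul]
    _ = prColY T pH X V := bijective_mul.sum_comp fun A => if colSpace (X * A) = V then pH A else 0

theorem IsAlphaType.uniqueSubspaceDegradation (hα : IsAlphaType pH) :
    UniqueSubspaceDegradation T pH := by
  intro V X X' h
  obtain ⟨G, rfl⟩ := exists_mul_gl_eq_of_colSpace_eq h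
  exact (hα.prColY_mul_gl X G V).symm

end Channel

/-- if T ≥ M and the LOC is row-space symmetric, then it has a
unique subspace degradation. -/
theorem row_space_symmetric_implies_unique_subspace_degradation
    {F : Type} [Field F] [Fintype F] (T M N : ℕ) (hTM : M ≤ T)
    (pH : Matrix (Fin M) (Fin N) F → ℝ) (hpH : IsPMF pH)
    (hrss : RowSpaceSymmetric T pH) :
    UniqueSubspaceDegradation T pH :=
  (hrss.isAlphaType hTM).uniqueSubspaceDegradation

end
end

section
/- LOC(H,T) has a unique subspace degradation if and only if Pr{⟨XH⟩ = V} = Pr{⟨X'H⟩ = V'} for all X, X' ∈ F^{T×M} and all subspaces V, V' of F^T satisfying dim(V) = dim(V'), rank(X) = rank(X'), V ⊆ ⟨X⟩ and V' ⊆ ⟨X'⟩. -/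
open scoped Classical
open Finset Matrix Module

noncomputable section

variable {F : Type} [Field F] [Fintype F]

/-! The general linear group acts transitively on the pairs `V ≤ U` of subspaces with prescribed
dimensions, so some invertible `P` carries `⟨X⟩` to `⟨X'⟩` and `V` to `V'`. Since `⟨PXH⟩ = P⟨XH⟩`,
the event `⟨XH⟩ = V` is the event `⟨PXH⟩ = V'`, and unique subspace degradation replaces the input
`PX` by `X'`, which has the same column space. Conversely, an output space never leaves the input
space, so subspaces `V` not contained in `⟨X⟩` have probability zero and only those inside `⟨X⟩`
matter. -/

section LinearAlgebra

variable {K E E' : Type*} [DivisionRing K] [AddCommGroup E] [Module K E]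
  [AddCommGroup E'] [Module K E']

theorem exists_linearEquiv_map_eq_of_finrank_eq [FiniteDimensional K E] [FiniteDimensional K E']
    {V : Submodule K E} {V' : Submodule K E'} (hE : finrank K E = finrank K E')
    (hV : finrank K V = finrank K V') :
    ∃ f : E ≃ₗ[K] E', V.map f.toLinearMap = V' := by
  let e : E ≃ₗ[K] E' := LinearEquiv.ofFinrankEq E E' hE
  let d : V.map e.toLinearMap ≃ₗ[K] V' :=
    LinearEquiv.ofFinrankEq _ _ ((e.finrank_map_eq V).trans hV)
  obtain ⟨g, hg⟩ := Submodule.exists_linearEquiv_restrict_eq d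
  refine ⟨e ≪≫ₗ g, Submodule.eq_of_le_of_finrank_eq ?_ ((LinearEquiv.finrank_map_eq _ V).trans hV)⟩
  rintro _ ⟨v, hv, rfl⟩
  have hdg : (d ⟨e v, Submodule.mem_map_of_mem hv⟩ : E') = g (e v) := hg _
  exact hdg ▸ (d _).2

theorem exists_linearEquiv_map_map_subtype {U U' : Submodule K E} [FiniteDimensional K U]
    (e : U ≃ₗ[K] U') :
    ∃ f : E ≃ₗ[K] E, ∀ W : Submodule K U,
      (W.map U.subtype).map f.toLinearMap = (W.map e.toLinearMap).map U'.subtype := by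
  obtain ⟨f, hf⟩ := Submodule.exists_linearEquiv_restrict_eq e
  have hcomp : f.toLinearMap ∘ₗ U.subtype = U'.subtype ∘ₗ e.toLinearMap :=
    LinearMap.ext fun x => (hf x).symm
  exact ⟨f, fun W => by rw [← Submodule.map_comp, hcomp, Submodule.map_comp]⟩

theorem exists_linearEquiv_map_eq_and_map_eq_of_le {U V U' V' : Submodule K E}
    [FiniteDimensional K U] [FiniteDimensional K U'] (hV : V ≤ U) (hV' : V' ≤ U')
    (hUU' : finrank K U = finrank K U') (hVV' : finrank K V = finrank K V') :
    ∃ f : E ≃ₗ[K] E, U.map f.toLinearMap = U' ∧ V.map f.toLinearMap = V' := by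
  have hsub : finrank K (V.submoduleOf U) = finrank K (V'.submoduleOf U') := by
    rw [(Submodule.submoduleOfEquivOfLe hV).finrank_eq,
      (Submodule.submoduleOfEquivOfLe hV').finrank_eq, hVV']
  obtain ⟨e, he⟩ := exists_linearEquiv_map_eq_of_finrank_eq hUU' hsub
  obtain ⟨f, hf⟩ := exists_linearEquiv_map_map_subtype e
  refine ⟨f, ?_, ?_⟩
  · simpa using hf ⊤
  · have hfV := hf (V.submoduleOf U)
    rwa [he, Submodule.submoduleOf, Submodule.submoduleOf, Submodule.map_comap_subtype,
      Submodule.map_comap_subtype, inf_eq_right.mpr hV, inf_eq_right.mpr hV'] at hfV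

end LinearAlgebra

section ColumnSpace

variable {K : Type} [Field K] {k m n : ℕ}

theorem colSpace_mul (A : Matrix (Fin k) (Fin m) K) (B : Matrix (Fin m) (Fin n) K) :
    colSpace (A * B) = (colSpace B).map A.mulVecLin := by
  rw [colSpace, Matrix.mulVecLin_mul, LinearMap.range_comp, colSpace]

theorem finrank_colSpace (A : Matrix (Fin m) (Fin n) K) : finrank K (colSpace A) = A.rank :=
  rfl

end ColumnSpace

section Channel

variable {S T M N : ℕ} (pH : Matrix (Fin M) (Fin N) F → ℝ)

theorem prColY_mul_map_mulVecLin {P : Matrix (Fin S) (Fin T) F}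
    (hP : Function.Injective P.mulVecLin) (X : Matrix (Fin T) (Fin M) F)
    (V : Submodule F (Fin T → F)) :
    prColY S pH (P * X) (V.map P.mulVecLin) = prColY T pH X V := by
  simp only [prColY, Matrix.mul_assoc P X, colSpace_mul P,
    (Submodule.map_injective_of_injective hP).eq_iff]

theorem prColY_eq_zero_of_not_le {X : Matrix (Fin T) (Fin M) F} {V : Submodule F (Fin T → F)}
    (hV : ¬V ≤ colSpace X) : prColY T pH X V = 0 :=
  Finset.sum_eq_zero fun H _ =>
    if_neg fun hXH : colSpace (X * H) = V => hV (hXH ▸ colSpace_mul_le X H)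

end Channel

/-- a LOC has a unique subspace degradation iff
Pr{⟨XH⟩ = V} = Pr{⟨X'H⟩ = V'} whenever dim V = dim V', rank X = rank X',
V ⊆ ⟨X⟩ and V' ⊆ ⟨X'⟩. -/
theorem unique_subspace_degradation_iff
    {F : Type} [Field F] [Fintype F] (T M N : ℕ)
    (pH : Matrix (Fin M) (Fin N) F → ℝ) (hpH : IsPMF pH) :
    UniqueSubspaceDegradation T pH ↔
      ∀ (X X' : Matrix (Fin T) (Fin M) F) (V V' : Submodule F (Fin T → F)),
        Module.finrank F V = Module.finrank F V' → X.rank = X'.rank →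
        V ≤ colSpace X → V' ≤ colSpace X' →
        prColY T pH X V = prColY T pH X' V' := by
  constructor
  · intro h X X' V V' hdim hrank hV hV'
    rw [← finrank_colSpace, ← finrank_colSpace] at hrank
    obtain ⟨f, hfX, hfV⟩ := exists_linearEquiv_map_eq_and_map_eq_of_le hV hV' hrank hdim
    obtain ⟨P, hP⟩ : ∃ P : Matrix (Fin T) (Fin T) F, P.mulVecLin = f.toLinearMap :=
      Matrix.toLin'.surjective f.toLinearMap
    have hPinj : Function.Injective P.mulVecLin := hP ▸ f.injective
    have hPX : colSpace (P * X) = colSpace X' := by rw [colSpace_mul, hP, hfX]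
    calc prColY T pH X V
      _ = prColY T pH (P * X) (V.map P.mulVecLin) := (prColY_mul_map_mulVecLin pH hPinj X V).symm
      _ = prColY T pH (P * X) V' := by rw [hP, hfV]
      _ = prColY T pH X' V' := h V' (P * X) X' hPX
  · intro h V X X' hXX'
    by_cases hV : V ≤ colSpace X
    · have hrank : X.rank = X'.rank := by rw [← finrank_colSpace, hXX', finrank_colSpace]
      exact h X X' V V rfl hrank hV (hXX' ▸ hV)
    · rw [prColY_eq_zero_of_not_le pH hV, prColY_eq_zero_of_not_le pH (hXX' ▸ hV)]

end
end

section
/- If LOC(H,T) has a unique subspace degradation, then its subspace coding capacity satisfies C_SS(H,T) = max over α-type input distributions on F^{T×M} of [ J(rank(X);rank(Y)) + I(rank(X);rank(Y)) ], where Y = XH; moreover, for such a LOC the joint distribution of (rank(X), rank(Y)) under an α-type input depends on the input distribution only through the rank distribution of X, so this maximum can be computed by maximizing over input rank distributions. -/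
open scoped Classical
open Finset Matrix Module

noncomputable section

variable {F : Type} [Field F] [Fintype F]

/-!
Unique subspace degradation, together with the transitivity of `GL(T, F)` on the pairs `V ≤ U` of
subspaces with given dimensions, makes `Pr{⟨XH⟩ = V}` depend only on `rank X` and `dim V`, for
`V ≤ ⟨X⟩`. Hence `rank Y` given `X` depends only on `rank X`, and `⟨Y⟩` is uniform among the
subspaces of `⟨X⟩` of dimension `rank Y`, of which there are `χ_r[s] / χ_s[s]`. Substituting this
into the mutual informations gives, for every input,
`J(rank X; rank Y) + I(rank X; rank Y) = I(⟨X⟩; ⟨Y⟩) + D`,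
where `D ≥ 0` is the divergence of the law of `⟨Y⟩` from its average over subspaces of equal
dimension. For an `α`-type input the law of `X`, and so that of `⟨Y⟩`, is invariant under
`GL(T, F)`, so `D = 0`. Finally, averaging an input over the matrices of equal rank makes it
`α`-type without changing the left-hand side.
-/

section FiniteLaws

variable {Ω Ω' A B C : Type*} [Fintype Ω] [Fintype Ω']

/-- The law of `f` under the weight `p`, i.e. the push-forward of `p` along `f`. It is a total
function on a possibly infinite type, so that the laws of ranks and of subspaces are treated
alike. -/
def law (p : Ω → ℝ) (f : Ω → A) (a : A) : ℝ := ∑ ω, if f ω = a then p ω else 0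

lemma law_nonneg {p : Ω → ℝ} (hp : ∀ ω, 0 ≤ p ω) (f : Ω → A) (a : A) : 0 ≤ law p f a :=
  sum_nonneg fun ω _ => ite_nonneg (hp ω) le_rfl

lemma law_pos {p : Ω → ℝ} (hp : ∀ ω, 0 ≤ p ω) (f : Ω → A) {ω : Ω} (hω : 0 < p ω) :
    0 < law p f (f ω) :=
  sum_pos' (fun ω' _ => ite_nonneg (hp ω') le_rfl) ⟨ω, mem_univ ω, by rwa [if_pos rfl]⟩

lemma sum_mul_comp_eq_sum_law_mul (p : Ω → ℝ) {f : Ω → A} {t : Finset A} (ht : ∀ ω, f ω ∈ t)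
    (φ : A → ℝ) : ∑ ω, p ω * φ (f ω) = ∑ a ∈ t, law p f a * φ a := by
  simp only [law, sum_mul, ite_mul, zero_mul]
  rw [sum_comm]
  exact sum_congr rfl fun ω _ => by rw [sum_ite_eq, if_pos (ht ω)]

lemma sum_mul_comp_congr {p : Ω → ℝ} {p' : Ω' → ℝ} {f : Ω → A} {f' : Ω' → A}
    (h : law p f = law p' f') (φ : A → ℝ) : ∑ ω, p ω * φ (f ω) = ∑ ω, p' ω * φ (f' ω) := by
  have hf : ∀ ω, f ω ∈ univ.image f ∪ univ.image f' := fun ω =>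
    mem_union_left _ (mem_image_of_mem f (mem_univ ω))
  have hf' : ∀ ω, f' ω ∈ univ.image f ∪ univ.image f' := fun ω =>
    mem_union_right _ (mem_image_of_mem f' (mem_univ ω))
  rw [sum_mul_comp_eq_sum_law_mul p hf, sum_mul_comp_eq_sum_law_mul p' hf', h]

lemma law_comp_congr {p : Ω → ℝ} {p' : Ω' → ℝ} {f : Ω → A} {f' : Ω' → A}
    (h : law p f = law p' f') (k : A → B) :
    law p (fun ω => k (f ω)) = law p' (fun ω => k (f' ω)) := by
  funext b
  simpa only [law, mul_ite, mul_one, mul_zero] using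
    sum_mul_comp_congr h fun a => if k a = b then 1 else 0

lemma law_law [Fintype A] (p : Ω → ℝ) (f : Ω → A) (k : A → B) :
    law (law p f) k = law p (fun ω => k (f ω)) := by
  funext b
  simpa only [law, mul_ite, mul_one, mul_zero] using
    (sum_mul_comp_eq_sum_law_mul p (fun ω => mem_univ (f ω))
      fun a => if k a = b then (1 : ℝ) else 0).symm

lemma IsPMF.law [Fintype A] {p : Ω → ℝ} (hp : IsPMF p) (f : Ω → A) : IsPMF (law p f) := by
  refine ⟨law_nonneg hp.1 f, ?_⟩
  simpa only [mul_one, hp.2] using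
    (sum_mul_comp_eq_sum_law_mul p (fun ω => mem_univ (f ω)) fun _ => 1).symm

lemma mutualInfo_eq_sum_law (p : Ω → ℝ) (f : Ω → A) (g : Ω → B) :
    mutualInfo p f g = ∑ ω, p ω * Real.logb 2
      (law p (fun ω => (f ω, g ω)) (f ω, g ω) / (law p f (f ω) * law p g (g ω))) := by
  simp only [mutualInfo, law, Prod.mk.injEq]

lemma mutualInfo_congr {p : Ω → ℝ} {p' : Ω' → ℝ} {f : Ω → A} {f' : Ω' → A} {g : Ω → B}
    {g' : Ω' → B} (h : law p (fun ω => (f ω, g ω)) = law p' (fun ω => (f' ω, g' ω))) :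
    mutualInfo p f g = mutualInfo p' f' g' := by
  have hf : law p f = law p' f' := law_comp_congr h Prod.fst
  have hg : law p g = law p' g' := law_comp_congr h Prod.snd
  rw [mutualInfo_eq_sum_law, mutualInfo_eq_sum_law, h, hf, hg]
  exact sum_mul_comp_congr h fun c => Real.logb 2
    (law p' (fun ω => (f' ω, g' ω)) c / (law p' f' c.1 * law p' g' c.2))

lemma IsPMF.prod {p : Ω → ℝ} {p' : Ω' → ℝ} (hp : IsPMF p) (hp' : IsPMF p') :
    IsPMF fun ω : Ω × Ω' => p ω.1 * p' ω.2 :=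
  ⟨fun ω => mul_nonneg (hp.1 ω.1) (hp'.1 ω.2), by
    simp only [Fintype.sum_prod_type, ← mul_sum, hp'.2, mul_one, hp.2]⟩

lemma law_prod_eq_mul (p : Ω → ℝ) {p' : Ω' → ℝ} {f : Ω → A} {g : Ω → Ω' → B} {a : A} {b : B}
    {c : ℝ} (h : ∀ x, f x = a → law p' (g x) b = c) :
    law (fun ω : Ω × Ω' => p ω.1 * p' ω.2) (fun ω => (f ω.1, g ω.1 ω.2)) (a, b) =
      law p f a * c := by
  simp only [law, Fintype.sum_prod_type, Prod.mk.injEq, sum_mul]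
  refine sum_congr rfl fun x _ => ?_
  by_cases hx : f x = a
  · simp only [hx, true_and, if_true, ← h x hx, law, mul_sum, mul_ite, mul_zero]
  · simp only [hx, false_and, if_false, sum_const_zero, zero_mul]

lemma law_prod_fst (p : Ω → ℝ) {p' : Ω' → ℝ} (hp' : ∑ y, p' y = 1) (f : Ω → A) :
    law (fun ω : Ω × Ω' => p ω.1 * p' ω.2) (fun ω => f ω.1) = law p f := by
  funext a
  simp only [law, Fintype.sum_prod_type, ← ite_zero_mul, ← mul_sum, hp', mul_one]

lemma mutualInfo_prod {p : Ω → ℝ} {p' : Ω' → ℝ} (hp : ∀ x, 0 ≤ p x) (hp' : ∑ y, p' y = 1)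
    {f : Ω → A} {g : Ω → Ω' → B} (h : ∀ x x', f x = f x' → law p' (g x) = law p' (g x')) :
    mutualInfo (fun ω : Ω × Ω' => p ω.1 * p' ω.2) (fun ω => f ω.1) (fun ω => g ω.1 ω.2) =
      ∑ ω : Ω × Ω', p ω.1 * p' ω.2 * Real.logb 2 (law p' (g ω.1) (g ω.1 ω.2) /
        law (fun ω : Ω × Ω' => p ω.1 * p' ω.2) (fun ω => g ω.1 ω.2) (g ω.1 ω.2)) := by
  rw [mutualInfo_eq_sum_law]
  refine sum_congr rfl fun ω _ => ?_
  rcases (hp ω.1).eq_or_lt with h0 | hpos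
  · simp only [← h0, zero_mul]
  · rw [law_prod_eq_mul p fun x hx => congrFun (h x ω.1 hx) (g ω.1 ω.2), law_prod_fst p hp',
      mul_div_mul_left _ _ (law_pos hp f hpos).ne']

end FiniteLaws

section Averaging

variable {Ω B : Type*} [Fintype Ω]

/-- The average of the weight `p` over the fibres of `k`: the weight that is constant on each fibre
and gives it the same mass as `p`. -/
def fiberAverage (p : Ω → ℝ) (k : Ω → B) (ω : Ω) : ℝ := law p k (k ω) / #{ω' | k ω' = k ω}

lemma card_fiber_pos (k : Ω → B) (ω : Ω) : 0 < (#{ω' | k ω' = k ω} : ℝ) :=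
  Nat.cast_pos.2 (card_pos.2 ⟨ω, mem_filter_univ ω |>.2 rfl⟩)

lemma law_fiberAverage (p : Ω → ℝ) (k : Ω → B) : law (fiberAverage p k) k = law p k := by
  funext b
  by_cases hb : ∃ ω, k ω = b
  · obtain ⟨ω, rfl⟩ := hb
    have hconst : ∀ ω' ∈ ({ω' | k ω' = k ω} : Finset Ω),
        fiberAverage p k ω' = law p k (k ω) / #{ω' | k ω' = k ω} := fun ω' hω' => by
      rw [fiberAverage, (mem_filter_univ ω').1 hω']
    rw [law, ← sum_filter, sum_congr rfl hconst, sum_const, nsmul_eq_mul,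
      mul_div_cancel₀ _ (card_fiber_pos k ω).ne']
  · push Not at hb
    simp only [law, hb, if_false]

lemma IsPMF.fiberAverage {p : Ω → ℝ} (hp : IsPMF p) (k : Ω → B) : IsPMF (fiberAverage p k) := by
  refine ⟨fun ω => div_nonneg (law_nonneg hp.1 k _) (Nat.cast_nonneg _), ?_⟩
  simpa only [mul_one, hp.2] using sum_mul_comp_congr (law_fiberAverage p k) fun _ => 1

lemma fiberAverage_pos {p : Ω → ℝ} (hp : ∀ ω, 0 ≤ p ω) (k : Ω → B) {ω : Ω} (hω : 0 < p ω) :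
    0 < fiberAverage p k ω :=
  div_pos (law_pos hp k hω) (card_fiber_pos k ω)

lemma fiberAverage_eq_self {p : Ω → ℝ} {k : Ω → B} (h : ∀ ω ω', k ω = k ω' → p ω = p ω') :
    fiberAverage p k = p := by
  funext ω
  have hconst : ∀ ω' ∈ ({ω' | k ω' = k ω} : Finset Ω), p ω' = p ω := fun ω' hω' =>
    h ω' ω ((mem_filter_univ ω').1 hω')
  rw [fiberAverage, law, ← sum_filter, sum_congr rfl hconst, sum_const, nsmul_eq_mul,
    mul_div_cancel_left₀ _ (card_fiber_pos k ω).ne']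

/-- The Kullback–Leibler divergence `D(p ‖ r)` in bits. A point with `p ω ≠ 0` and `r ω = 0`
contributes `0` rather than `∞`, hence the absolute continuity hypothesis in
`klDivergence_nonneg`. -/
def klDivergence (p r : Ω → ℝ) : ℝ := ∑ ω, p ω * Real.logb 2 (p ω / r ω)

lemma klDivergence_nonneg {p r : Ω → ℝ} (hp : ∀ ω, 0 ≤ p ω) (hr : ∀ ω, 0 ≤ r ω)
    (hsum : ∑ ω, r ω ≤ ∑ ω, p ω) (hpr : ∀ ω, 0 < p ω → 0 < r ω) : 0 ≤ klDivergence p r := by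
  have hlog2 : 0 < Real.log 2 := Real.log_pos one_lt_two
  have hterm : ∀ ω, (p ω - r ω) / Real.log 2 ≤ p ω * Real.logb 2 (p ω / r ω) := fun ω => by
    rw [Real.logb, ← mul_div_assoc]
    refine div_le_div_of_nonneg_right ?_ hlog2.le
    rcases (hp ω).eq_or_lt with h0 | hpos
    · simpa only [← h0, zero_sub, zero_mul, neg_nonpos] using hr ω
    · have hrω := hpr ω hpos
      calc p ω - r ω = r ω * (p ω / r ω - 1) := by field_simp
        _ ≤ r ω * (p ω / r ω * Real.log (p ω / r ω)) :=
            mul_le_mul_of_nonneg_left (Real.self_sub_one_le_mul_log (by positivity)) hrω.le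
        _ = p ω * Real.log (p ω / r ω) := by field_simp
  calc 0 ≤ (∑ ω, p ω - ∑ ω, r ω) / Real.log 2 := div_nonneg (sub_nonneg.2 hsum) hlog2.le
    _ = ∑ ω, (p ω - r ω) / Real.log 2 := by rw [← sum_sub_distrib, sum_div]
    _ ≤ klDivergence p r := sum_le_sum fun ω _ => hterm ω

lemma klDivergence_self (p : Ω → ℝ) : klDivergence p p = 0 :=
  sum_eq_zero fun ω _ => by
    rcases eq_or_ne (p ω) 0 with h | h
    · rw [h, zero_mul]
    · rw [div_self h, Real.logb_one, mul_zero]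

end Averaging

section SubspaceTransitivity

variable {K E : Type*} [Field K] [AddCommGroup E] [Module K E]

lemma map_map_subtype_of_extends {U U' : Submodule K E} {e : U ≃ₗ[K] U'} {g : E ≃ₗ[K] E}
    (hg : ∀ x : U, (e x : E) = g x) (W : Submodule K U) :
    (W.map U.subtype).map g.toLinearMap = (W.map e.toLinearMap).map U'.subtype := by
  rw [← Submodule.map_comp, ← Submodule.map_comp]
  exact congrArg (W.map ·) (LinearMap.ext fun x => (hg x).symm)

variable [FiniteDimensional K E]

lemma exists_linearEquiv_map_eq {W W' : Submodule K E} (h : finrank K W = finrank K W') :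
    ∃ g : E ≃ₗ[K] E, W.map g.toLinearMap = W' := by
  obtain ⟨g, hg⟩ := Submodule.exists_linearEquiv_restrict_eq (LinearEquiv.ofFinrankEq W W' h)
  refine ⟨g, ?_⟩
  simpa only [Submodule.map_top, Submodule.range_subtype, LinearEquiv.range] using
    map_map_subtype_of_extends hg ⊤

lemma exists_linearEquiv_map_eq_of_le {U V V' : Submodule K E} (hV : V ≤ U) (hV' : V' ≤ U)
    (h : finrank K V = finrank K V') :
    ∃ g : E ≃ₗ[K] E, U.map g.toLinearMap = U ∧ V.map g.toLinearMap = V' := by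
  have hcomap : finrank K (V.comap U.subtype) = finrank K (V'.comap U.subtype) := by
    rw [(Submodule.comapSubtypeEquivOfLe hV).finrank_eq,
      (Submodule.comapSubtypeEquivOfLe hV').finrank_eq, h]
  obtain ⟨e, he⟩ := exists_linearEquiv_map_eq hcomap
  obtain ⟨g, hg⟩ := Submodule.exists_linearEquiv_restrict_eq e
  refine ⟨g, ?_, ?_⟩
  · simpa only [Submodule.map_top, Submodule.range_subtype, LinearEquiv.range] using
      map_map_subtype_of_extends hg ⊤
  · simpa only [he, Submodule.map_comap_subtype, inf_eq_right.2 hV, inf_eq_right.2 hV'] using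
      map_map_subtype_of_extends hg (V.comap U.subtype)

end SubspaceTransitivity

section ColumnSpaces

variable {K : Type} [Field K] {T M N : ℕ}

lemma colSpace_mul_s16 (P : Matrix (Fin T) (Fin M) K) (X : Matrix (Fin M) (Fin N) K) :
    colSpace (P * X) = (colSpace X).map P.mulVecLin := by
  rw [colSpace, Matrix.mulVecLin_mul, LinearMap.range_comp, colSpace]

lemma colSpace_mul_le_s16 (X : Matrix (Fin T) (Fin M) K) (H : Matrix (Fin M) (Fin N) K) :
    colSpace (X * H) ≤ colSpace X := by
  rw [colSpace_mul_s16]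
  exact LinearMap.map_le_range

lemma rowSpace_mul_of_isUnit {P : Matrix (Fin T) (Fin T) K} (hP : IsUnit P)
    (X : Matrix (Fin T) (Fin M) K) : rowSpace (P * X) = rowSpace X := by
  have hPt : colSpace Pᵀ = ⊤ := LinearMap.range_eq_top.2
    (Matrix.mulVec_surjective_iff_isUnit.2 ((Matrix.isUnit_transpose P).2 hP))
  rw [rowSpace, Matrix.transpose_mul, colSpace_mul_s16, hPt, Submodule.map_top, rowSpace, colSpace]

lemma rank_eq_of_rowSpace_eq {X X' : Matrix (Fin T) (Fin M) K} (h : rowSpace X = rowSpace X') :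
    X.rank = X'.rank := by
  rw [← X.rank_transpose, ← X'.rank_transpose]
  exact congrArg (fun W : Submodule K (Fin M → K) => finrank K W) h

lemma exists_isUnit_mulVecLin_eq (g : (Fin T → K) ≃ₗ[K] (Fin T → K)) :
    ∃ P : Matrix (Fin T) (Fin T) K, IsUnit P ∧ P.mulVecLin = g.toLinearMap := by
  let P := GeneralLinearGroup.toLin.symm (LinearMap.GeneralLinearGroup.ofLinearEquiv g)
  refine ⟨P, P.isUnit, ?_⟩
  rw [← GeneralLinearGroup.coe_toLin, MulEquiv.apply_symm_apply]
  rfl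

lemma map_mulVecLin_injective {P : Matrix (Fin T) (Fin T) K} (hP : IsUnit P) :
    Function.Injective (Submodule.map P.mulVecLin) :=
  Submodule.map_injective_of_injective (Matrix.mulVec_injective_of_isUnit hP)

end ColumnSpaces

section GaussianBinomials

variable {q : ℕ}

lemma chi_pos (hq : 1 < q) {m s : ℕ} (h : s ≤ m) : 0 < chi q m s :=
  prod_pos fun _ hi => Nat.sub_pos_of_lt (Nat.pow_lt_pow_right hq ((mem_range.1 hi).trans_le h))

lemma gaussR_pos (hq : 1 < q) {m s : ℕ} (h : s ≤ m) : 0 < gaussR q m s :=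
  div_pos (Nat.cast_pos.2 (chi_pos hq h)) (Nat.cast_pos.2 (chi_pos hq le_rfl))

lemma chi_div_chi (hq : 1 < q) (m r s : ℕ) :
    (chi q m s : ℝ) / chi q r s = gaussR q m s / gaussR q r s := by
  rw [gaussR, gaussR, div_div_div_cancel_right₀ (Nat.cast_ne_zero.2 (chi_pos hq le_rfl).ne')]

end GaussianBinomials

section CountingSubspaces

variable {K E : Type*} [Field K] [AddCommGroup E] [Module K E] [Fintype E]

/-- The `s`-dimensional subspaces of `E` contained in `U`. -/
def subspaces (U : Submodule K E) (s : ℕ) : Finset (Submodule K E) := {V | V ≤ U ∧ finrank K V = s}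

lemma mem_subspaces {U V : Submodule K E} {s : ℕ} :
    V ∈ subspaces U s ↔ V ≤ U ∧ finrank K V = s :=
  mem_filter_univ V

/-- The `s`-tuples of linearly independent vectors of `U`. -/
def independentTuples (U : Submodule K E) (s : ℕ) : Finset (Fin s → E) :=
  {v | LinearIndependent K v ∧ ∀ i, v i ∈ U}

lemma mem_independentTuples {U : Submodule K E} {s : ℕ} {v : Fin s → E} :
    v ∈ independentTuples U s ↔ LinearIndependent K v ∧ ∀ i, v i ∈ U :=
  mem_filter_univ v

lemma span_mem_subspaces {U : Submodule K E} {s : ℕ} {v : Fin s → E}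
    (hv : v ∈ independentTuples U s) : Submodule.span K (Set.range v) ∈ subspaces U s := by
  obtain ⟨hli, hU⟩ := mem_independentTuples.1 hv
  exact mem_subspaces.2 ⟨Submodule.span_le.2 (Set.range_subset_iff.2 hU), by
    rw [finrank_span_eq_card hli, Fintype.card_fin]⟩

lemma filter_span_eq_independentTuples {U V : Submodule K E} {s : ℕ} (hV : V ∈ subspaces U s) :
    {v ∈ independentTuples U s | Submodule.span K (Set.range v) = V} = independentTuples V s := by
  obtain ⟨hVU, hVs⟩ := mem_subspaces.1 hV
  ext v
  rw [mem_filter]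
  constructor
  · rintro ⟨hv, rfl⟩
    exact mem_independentTuples.2
      ⟨(mem_independentTuples.1 hv).1, fun i => Submodule.subset_span ⟨i, rfl⟩⟩
  · intro hv
    obtain ⟨hli, hmem⟩ := mem_independentTuples.1 hv
    obtain ⟨hle, hs⟩ := mem_subspaces.1 (span_mem_subspaces hv)
    exact ⟨mem_independentTuples.2 ⟨hli, fun i => hVU (hmem i)⟩,
      Submodule.eq_of_le_of_finrank_eq hle (hs.trans hVs.symm)⟩

variable [Fintype K]

lemma card_independentTuples (U : Submodule K E) (s : ℕ) :
    #(independentTuples U s) = chi (Fintype.card K) (finrank K U) s := by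
  let e : {v : Fin s → U // LinearIndependent K v} ≃ independentTuples U s :=
    { toFun := fun v => ⟨fun i => v.1 i, mem_independentTuples.2
        ⟨v.2.map' U.subtype U.ker_subtype, fun i => (v.1 i).2⟩⟩
      invFun := fun v => ⟨fun i => ⟨v.1 i, (mem_independentTuples.1 v.2).2 i⟩,
        LinearIndependent.of_comp U.subtype (mem_independentTuples.1 v.2).1⟩
      left_inv := fun _ => rfl
      right_inv := fun _ => rfl }
  rw [← Fintype.card_coe, ← Nat.card_eq_fintype_card, ← Nat.card_congr e]
  rcases le_or_gt s (finrank K U) with hs | hs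
  · rw [card_linearIndependent hs, chi, ← Fin.prod_univ_eq_prod_range]
  · have : IsEmpty {v : Fin s → U // LinearIndependent K v} :=
      ⟨fun v => hs.not_ge (by simpa only [Fintype.card_fin] using v.2.fintype_card_le_finrank)⟩
    rw [Nat.card_of_isEmpty, chi]
    exact (prod_eq_zero (mem_range.2 hs) (Nat.sub_self (Fintype.card K ^ finrank K U))).symm

lemma card_subspaces_mul_chi (U : Submodule K E) (s : ℕ) :
    #(subspaces U s) * chi (Fintype.card K) s s = chi (Fintype.card K) (finrank K U) s := by
  rw [← card_independentTuples U, card_eq_sum_card_fiberwise fun v hv => span_mem_subspaces hv,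
    sum_const_nat fun V hV => ?_]
  rw [filter_span_eq_independentTuples hV, card_independentTuples, (mem_subspaces.1 hV).2]

lemma card_subspaces (U : Submodule K E) (s : ℕ) :
    (#(subspaces U s) : ℝ) = gaussR (Fintype.card K) (finrank K U) s := by
  have hs : (chi (Fintype.card K) s s : ℝ) ≠ 0 :=
    Nat.cast_ne_zero.2 (chi_pos Fintype.one_lt_card le_rfl).ne'
  rw [gaussR, eq_div_iff hs, ← card_subspaces_mul_chi U s, Nat.cast_mul]

end CountingSubspaces

section SubspaceDegradation

variable {T M N : ℕ} {pX pX' : Matrix (Fin T) (Fin M) F → ℝ} {pH : Matrix (Fin M) (Fin N) F → ℝ}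

lemma prColY_mul_map (pH : Matrix (Fin M) (Fin N) F → ℝ) {P : Matrix (Fin T) (Fin T) F}
    (hP : IsUnit P) (X : Matrix (Fin T) (Fin M) F) (V : Submodule F (Fin T → F)) :
    prColY T pH (P * X) (V.map P.mulVecLin) = prColY T pH X V := by
  simp only [prColY, Matrix.mul_assoc, colSpace_mul_s16 P, (map_mulVecLin_injective hP).eq_iff]

lemma prColY_eq_of_finrank_eq (husd : UniqueSubspaceDegradation T pH)
    {X : Matrix (Fin T) (Fin M) F} {V V' : Submodule F (Fin T → F)} (hV : V ≤ colSpace X)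
    (hV' : V' ≤ colSpace X) (h : finrank F V = finrank F V') :
    prColY T pH X V = prColY T pH X V' := by
  obtain ⟨g, hgX, rfl⟩ := exists_linearEquiv_map_eq_of_le hV hV' h
  obtain ⟨P, hP, hPg⟩ := exists_isUnit_mulVecLin_eq g
  rw [← hPg] at hgX ⊢
  rw [← prColY_mul_map pH hP X V]
  exact husd _ _ _ ((colSpace_mul_s16 P X).trans hgX)

lemma law_rank_eq_sum_prColY (pH : Matrix (Fin M) (Fin N) F → ℝ) (X : Matrix (Fin T) (Fin M) F)
    (s : ℕ) :
    law pH (fun H => (X * H).rank) s = ∑ V ∈ subspaces (colSpace X) s, prColY T pH X V := by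
  simp only [prColY]
  rw [sum_comm]
  refine sum_congr rfl fun H _ => ?_
  rw [sum_ite_eq]
  simp only [mem_subspaces, colSpace_mul_le_s16, true_and]
  congr!

lemma law_rank_eq_gaussR_mul_prColY (husd : UniqueSubspaceDegradation T pH)
    {X : Matrix (Fin T) (Fin M) F} {V : Submodule F (Fin T → F)} (hV : V ≤ colSpace X) :
    law pH (fun H => (X * H).rank) (finrank F V) =
      gaussR (Fintype.card F) X.rank (finrank F V) * prColY T pH X V := by
  have hconst : ∀ V' ∈ subspaces (colSpace X) (finrank F V), prColY T pH X V' = prColY T pH X V :=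
    fun V' hV' => prColY_eq_of_finrank_eq husd (mem_subspaces.1 hV').1 hV (mem_subspaces.1 hV').2
  rw [law_rank_eq_sum_prColY, sum_congr rfl hconst, sum_const, nsmul_eq_mul, card_subspaces]
  rfl

lemma law_rank_eq_of_rank_eq (husd : UniqueSubspaceDegradation T pH)
    {X X' : Matrix (Fin T) (Fin M) F} (h : X.rank = X'.rank) :
    law pH (fun H => (X * H).rank) = law pH (fun H => (X' * H).rank) := by
  obtain ⟨g, hg⟩ := exists_linearEquiv_map_eq (W := colSpace X) (W' := colSpace X') h
  obtain ⟨P, hP, hPg⟩ := exists_isUnit_mulVecLin_eq g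
  have hcol : colSpace (P * X) = colSpace X' := by rw [colSpace_mul_s16, hPg, hg]
  have hlaw : law pH (fun H => colSpace (P * X * H)) = law pH (fun H => colSpace (X' * H)) :=
    funext fun V => husd V _ _ hcol
  have hrank : ∀ H : Matrix (Fin M) (Fin N) F, (P * X * H).rank = (X * H).rank := fun H => by
    rw [Matrix.mul_assoc, rank_mul_eq_right_of_isUnit_det _ _ ((isUnit_iff_isUnit_det P).1 hP)]
  simp only [← hrank]
  exact law_comp_congr hlaw fun V => finrank F V

lemma prRankX_eq_law (pX : Matrix (Fin T) (Fin M) F → ℝ) :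
    prRankX pX = law pX fun X => X.rank := by
  funext r
  simp only [prRankX, law]
  congr!

lemma prRankXY_eq_law (pX : Matrix (Fin T) (Fin M) F → ℝ) (pH : Matrix (Fin M) (Fin N) F → ℝ)
    (r s : ℕ) :
    prRankXY pX pH r s = law (jointPMF pX pH) (fun ω => (ω.1.rank, (ω.1 * ω.2).rank)) (r, s) := by
  simp only [prRankXY, law, Prod.mk.injEq]

lemma prRankXY_eq_mul (husd : UniqueSubspaceDegradation T pH)
    (pX : Matrix (Fin T) (Fin M) F → ℝ) (X : Matrix (Fin T) (Fin M) F) (s : ℕ) :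
    prRankXY pX pH X.rank s = prRankX pX X.rank * law pH (fun H => (X * H).rank) s := by
  rw [prRankXY_eq_law, prRankX_eq_law]
  exact law_prod_eq_mul (f := fun X : Matrix (Fin T) (Fin M) F => X.rank)
    (g := fun X (H : Matrix (Fin M) (Fin N) F) => (X * H).rank) pX
    fun X' hX' => congrFun (law_rank_eq_of_rank_eq husd hX') s

lemma prRankXY_congr (husd : UniqueSubspaceDegradation T pH)
    (h : ∀ r, prRankX pX r = prRankX pX' r) (r s : ℕ) :
    prRankXY pX pH r s = prRankXY pX' pH r s := by
  by_cases hr : ∃ X : Matrix (Fin T) (Fin M) F, X.rank = r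
  · obtain ⟨X, rfl⟩ := hr
    rw [prRankXY_eq_mul husd, prRankXY_eq_mul husd, h]
  · push Not at hr
    simp only [prRankXY, hr, false_and, if_false]

end SubspaceDegradation

section Capacity

variable {T M N : ℕ} {pX pX' : Matrix (Fin T) (Fin M) F → ℝ} {pH : Matrix (Fin M) (Fin N) F → ℝ}

/-- The law of the output subspace `⟨Y⟩`. -/
def outputSpaceLaw (pX : Matrix (Fin T) (Fin M) F → ℝ) (pH : Matrix (Fin M) (Fin N) F → ℝ) :
    Submodule F (Fin T → F) → ℝ :=
  law (jointPMF pX pH) fun ω => colSpace (ω.1 * ω.2)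

/-- The divergence of the law of `⟨Y⟩` from its average over the subspaces of equal dimension. -/
def outputSpaceDivergence (pX : Matrix (Fin T) (Fin M) F → ℝ)
    (pH : Matrix (Fin M) (Fin N) F → ℝ) : ℝ :=
  klDivergence (outputSpaceLaw pX pH)
    (fiberAverage (outputSpaceLaw pX pH) fun V : Submodule F (Fin T → F) => finrank F V)

lemma isPMF_outputSpaceLaw (hX : IsPMF pX) (hH : IsPMF pH) : IsPMF (outputSpaceLaw pX pH) :=
  (hX.prod hH).law _

lemma outputSpaceDivergence_nonneg (hX : IsPMF pX) (hH : IsPMF pH) :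
    0 ≤ outputSpaceDivergence pX pH := by
  have hV := isPMF_outputSpaceLaw hX hH
  have havg := hV.fiberAverage fun V : Submodule F (Fin T → F) => finrank F V
  exact klDivergence_nonneg hV.1 havg.1 (havg.2.trans hV.2.symm).le fun V =>
    fiberAverage_pos hV.1 _

lemma outputSpaceLaw_map_of_isAlphaType (hα : IsAlphaType pX)
    (pH : Matrix (Fin M) (Fin N) F → ℝ) {P : Matrix (Fin T) (Fin T) F} (hP : IsUnit P)
    (V : Submodule F (Fin T → F)) :
    outputSpaceLaw pX pH (V.map P.mulVecLin) = outputSpaceLaw pX pH V := by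
  obtain ⟨_⟩ := hP.nonempty_invertible
  have hbij : Function.Bijective
      (Prod.map (P * ·) id : Matrix (Fin T) (Fin M) F × Matrix (Fin M) (Fin N) F → _) :=
    (Finite.injective_iff_bijective.1 (mul_right_injective_of_invertible P)).prodMap
      Function.bijective_id
  refine (Fintype.sum_bijective _ hbij _ _ fun ω => ?_).symm
  simp only [Prod.map_fst, Prod.map_snd, id, jointPMF, Matrix.mul_assoc, colSpace_mul_s16 P,
    (map_mulVecLin_injective hP).eq_iff, hα _ _ (rowSpace_mul_of_isUnit hP ω.1)]
  congr!

lemma outputSpaceDivergence_eq_zero (hα : IsAlphaType pX) (pH : Matrix (Fin M) (Fin N) F → ℝ) :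
    outputSpaceDivergence pX pH = 0 := by
  have hconst : ∀ V V' : Submodule F (Fin T → F), finrank F V = finrank F V' →
      outputSpaceLaw pX pH V = outputSpaceLaw pX pH V' := fun V V' h => by
    obtain ⟨g, rfl⟩ := exists_linearEquiv_map_eq h
    obtain ⟨P, hP, hPg⟩ := exists_isUnit_mulVecLin_eq g
    rw [← hPg, outputSpaceLaw_map_of_isAlphaType hα pH hP]
  rw [outputSpaceDivergence, fiberAverage_eq_self hconst, klDivergence_self]

lemma fiberAverage_outputSpaceLaw (pX : Matrix (Fin T) (Fin M) F → ℝ)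
    (pH : Matrix (Fin M) (Fin N) F → ℝ) (V : Submodule F (Fin T → F)) :
    fiberAverage (outputSpaceLaw pX pH) (fun V : Submodule F (Fin T → F) => finrank F V) V =
      law (jointPMF pX pH) (fun ω => (ω.1 * ω.2).rank) (finrank F V) /
        gaussR (Fintype.card F) T (finrank F V) := by
  have hcard := card_subspaces (⊤ : Submodule F (Fin T → F)) (finrank F V)
  simp only [subspaces, le_top, true_and, finrank_top, finrank_fin_fun] at hcard
  rw [fiberAverage, outputSpaceLaw, law_law, ← hcard]
  congr!

lemma Jrank_eq_sum (q : ℕ) (pX : Matrix (Fin T) (Fin M) F → ℝ)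
    (pH : Matrix (Fin M) (Fin N) F → ℝ) :
    Jrank q pX pH = ∑ ω, jointPMF pX pH ω * Real.logb 2
      ((chi q T (ω.1 * ω.2).rank : ℝ) / chi q ω.1.rank (ω.1 * ω.2).rank) := by
  have hrange : ∀ ω : Matrix (Fin T) (Fin M) F × Matrix (Fin M) (Fin N) F,
      (ω.1.rank, (ω.1 * ω.2).rank) ∈ range (T + 1) ×ˢ range (T + 1) := fun ω =>
    mem_product.2 ⟨mem_range_succ_iff.2 ω.1.rank_le_height,
      mem_range_succ_iff.2 (ω.1 * ω.2).rank_le_height⟩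
  rw [sum_mul_comp_eq_sum_law_mul (jointPMF pX pH) hrange
    fun c => Real.logb 2 ((chi q T c.2 : ℝ) / chi q c.1 c.2), sum_product]
  simp only [Jrank, prRankXY_eq_law]

lemma miRankRank_eq_sum (husd : UniqueSubspaceDegradation T pH) (hX : IsPMF pX) (hH : IsPMF pH) :
    miRankRank pX pH = ∑ ω, jointPMF pX pH ω * Real.logb 2
      (gaussR (Fintype.card F) ω.1.rank (ω.1 * ω.2).rank *
          prColY T pH ω.1 (colSpace (ω.1 * ω.2)) /
        law (jointPMF pX pH) (fun ω => (ω.1 * ω.2).rank) (ω.1 * ω.2).rank) := by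
  refine (mutualInfo_prod hX.1 hH.2 (f := fun X : Matrix (Fin T) (Fin M) F => X.rank)
    (g := fun X (H : Matrix (Fin M) (Fin N) F) => (X * H).rank)
    fun _ _ => law_rank_eq_of_rank_eq husd).trans (sum_congr rfl fun ω _ => ?_)
  exact congrArg (fun c => jointPMF pX pH ω * Real.logb 2
    (c / law (jointPMF pX pH) (fun ω => (ω.1 * ω.2).rank) (ω.1 * ω.2).rank))
    (law_rank_eq_gaussR_mul_prColY husd (colSpace_mul_le_s16 ω.1 ω.2))

lemma miColCol_eq_sum (husd : UniqueSubspaceDegradation T pH) (hX : IsPMF pX) (hH : IsPMF pH) :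
    miColCol pX pH = ∑ ω, jointPMF pX pH ω * Real.logb 2
      (prColY T pH ω.1 (colSpace (ω.1 * ω.2)) / outputSpaceLaw pX pH (colSpace (ω.1 * ω.2))) :=
  mutualInfo_prod hX.1 hH.2 (f := colSpace)
    (g := fun X (H : Matrix (Fin M) (Fin N) F) => colSpace (X * H))
    fun X X' h => funext fun V => husd V X X' h

lemma outputSpaceDivergence_eq_sum (pX : Matrix (Fin T) (Fin M) F → ℝ)
    (pH : Matrix (Fin M) (Fin N) F → ℝ) :
    outputSpaceDivergence pX pH = ∑ ω, jointPMF pX pH ω * Real.logb 2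
      (outputSpaceLaw pX pH (colSpace (ω.1 * ω.2)) /
        (law (jointPMF pX pH) (fun ω => (ω.1 * ω.2).rank) (ω.1 * ω.2).rank /
          gaussR (Fintype.card F) T (ω.1 * ω.2).rank)) := by
  simp only [outputSpaceDivergence, klDivergence, fiberAverage_outputSpaceLaw]
  exact (sum_mul_comp_eq_sum_law_mul (jointPMF pX pH) (fun _ => mem_univ _) fun V =>
    Real.logb 2 (outputSpaceLaw pX pH V / (law (jointPMF pX pH) (fun ω => (ω.1 * ω.2).rank)
      (finrank F V) / gaussR (Fintype.card F) T (finrank F V)))).symm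

theorem Jrank_add_miRankRank (husd : UniqueSubspaceDegradation T pH) (hX : IsPMF pX)
    (hH : IsPMF pH) :
    Jrank (Fintype.card F) pX pH + miRankRank pX pH =
      miColCol pX pH + outputSpaceDivergence pX pH := by
  rw [Jrank_eq_sum, miRankRank_eq_sum husd hX hH, miColCol_eq_sum husd hX hH,
    outputSpaceDivergence_eq_sum, ← sum_add_distrib, ← sum_add_distrib]
  refine sum_congr rfl fun ω _ => ?_
  have hjoint := (hX.prod hH).1
  rcases (hjoint ω).eq_or_lt with h0 | hpos
  · simp only [jointPMF, ← h0, zero_mul]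
  · have hcol : 0 < prColY T pH ω.1 (colSpace (ω.1 * ω.2)) :=
      law_pos hH.1 (fun H => colSpace (ω.1 * H)) (pos_of_mul_pos_right hpos (hX.1 ω.1))
    have hspace : 0 < outputSpaceLaw pX pH (colSpace (ω.1 * ω.2)) :=
      law_pos hjoint (fun ω => colSpace (ω.1 * ω.2)) hpos
    have hrank : 0 < law (jointPMF pX pH) (fun ω => (ω.1 * ω.2).rank) (ω.1 * ω.2).rank :=
      law_pos hjoint (fun ω => (ω.1 * ω.2).rank) hpos
    have hq : 1 < Fintype.card F := Fintype.one_lt_card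
    have hgaussT := gaussR_pos hq (ω.1 * ω.2).rank_le_height
    have hgaussX := gaussR_pos hq (ω.1.rank_mul_le_left ω.2)
    rw [← mul_add, ← mul_add, chi_div_chi hq, ← Real.logb_mul (by positivity) (by positivity),
      ← Real.logb_mul (by positivity) (by positivity)]
    congr 2
    field_simp

lemma miColCol_le (husd : UniqueSubspaceDegradation T pH) (hX : IsPMF pX) (hH : IsPMF pH) :
    miColCol pX pH ≤ Jrank (Fintype.card F) pX pH + miRankRank pX pH := by
  rw [Jrank_add_miRankRank husd hX hH]
  exact le_add_of_nonneg_right (outputSpaceDivergence_nonneg hX hH)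

lemma miColCol_eq_of_isAlphaType (husd : UniqueSubspaceDegradation T pH) (hX : IsPMF pX)
    (hα : IsAlphaType pX) (hH : IsPMF pH) :
    miColCol pX pH = Jrank (Fintype.card F) pX pH + miRankRank pX pH := by
  rw [Jrank_add_miRankRank husd hX hH, outputSpaceDivergence_eq_zero hα, add_zero]

lemma Jrank_add_miRankRank_congr (q : ℕ) (h : ∀ r s, prRankXY pX pH r s = prRankXY pX' pH r s) :
    Jrank q pX pH + miRankRank pX pH = Jrank q pX' pH + miRankRank pX' pH := by
  have hlaw : law (jointPMF pX pH) (fun ω => (ω.1.rank, (ω.1 * ω.2).rank)) =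
      law (jointPMF pX' pH) (fun ω => (ω.1.rank, (ω.1 * ω.2).rank)) :=
    funext fun ⟨r, s⟩ => by rw [← prRankXY_eq_law, ← prRankXY_eq_law, h]
  simp only [Jrank, h, miRankRank, mutualInfo_congr hlaw]

lemma isAlphaType_fiberAverage_rank (pX : Matrix (Fin T) (Fin M) F → ℝ) :
    IsAlphaType (fiberAverage pX fun X => X.rank) := fun X X' h => by
  simp only [fiberAverage, rank_eq_of_rowSpace_eq h]

lemma prRankX_fiberAverage_rank (pX : Matrix (Fin T) (Fin M) F → ℝ) :
    prRankX (fiberAverage pX fun X => X.rank) = prRankX pX := by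
  rw [prRankX_eq_law, prRankX_eq_law, law_fiberAverage]

lemma exists_isAlphaType_miColCol_le (husd : UniqueSubspaceDegradation T pH) (hX : IsPMF pX)
    (hH : IsPMF pH) :
    ∃ pX' : Matrix (Fin T) (Fin M) F → ℝ, IsPMF pX' ∧ IsAlphaType pX' ∧
      miColCol pX pH ≤ Jrank (Fintype.card F) pX' pH + miRankRank pX' pH := by
  refine ⟨fiberAverage pX fun X => X.rank, hX.fiberAverage _, isAlphaType_fiberAverage_rank pX, ?_⟩
  rw [Jrank_add_miRankRank_congr _
    (prRankXY_congr husd (congrFun (prRankX_fiberAverage_rank pX)))]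
  exact miColCol_le husd hX hH

end Capacity

theorem unique_subspace_degradation_capacity_general
    {F : Type} [Field F] [Fintype F] (q T M N : ℕ) (hq : Fintype.card F = q)
    (pH : Matrix (Fin M) (Fin N) F → ℝ) (hpH : IsPMF pH)
    (husd : UniqueSubspaceDegradation T pH) :
    (sSup {c : ℝ | ∃ pX : Matrix (Fin T) (Fin M) F → ℝ,
          IsPMF pX ∧ c = miColCol pX pH}
      = sSup {c : ℝ | ∃ pX : Matrix (Fin T) (Fin M) F → ℝ,
          IsPMF pX ∧ IsAlphaType pX ∧ c = Jrank q pX pH + miRankRank pX pH})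
    ∧ ∀ pX pX' : Matrix (Fin T) (Fin M) F → ℝ, (∀ r : ℕ, prRankX pX r = prRankX pX' r) →
        ∀ r s : ℕ, prRankXY pX pH r s = prRankXY pX' pH r s := by
  subst hq
  refine ⟨csSup_eq_csSup_of_forall_exists_le ?_ ?_, fun pX pX' h => prRankXY_congr husd h⟩
  · rintro _ ⟨pX, hX, rfl⟩
    obtain ⟨pX', hX', hα, hle⟩ := exists_isAlphaType_miColCol_le husd hX hpH
    exact ⟨_, ⟨pX', hX', hα, rfl⟩, hle⟩
  · rintro _ ⟨pX, hX, hα, rfl⟩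
    exact ⟨_, ⟨pX, hX, rfl⟩, (miColCol_eq_of_isAlphaType husd hX hα hpH).ge⟩

/-- for a LOC with a unique subspace degradation, the subspace
coding capacity equals the maximum over α-type inputs of J(rank X;rank Y) +
I(rank X;rank Y); moreover the joint rank distribution under an α-type input
depends only on the input rank distribution. -/
theorem unique_subspace_degradation_capacity
    {F : Type} [Field F] [Fintype F] (q T M N : ℕ) (hq : Fintype.card F = q)
    (pH : Matrix (Fin M) (Fin N) F → ℝ) (hpH : IsPMF pH)
    (husd : UniqueSubspaceDegradation T pH) :
    (sSup {c : ℝ | ∃ pX : Matrix (Fin T) (Fin M) F → ℝ,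
          IsPMF pX ∧ c = miColCol pX pH}
      = sSup {c : ℝ | ∃ pX : Matrix (Fin T) (Fin M) F → ℝ,
          IsPMF pX ∧ IsAlphaType pX ∧ c = Jrank q pX pH + miRankRank pX pH})
    ∧ (∀ pX pX' : Matrix (Fin T) (Fin M) F → ℝ,
        IsPMF pX → IsAlphaType pX → IsPMF pX' → IsAlphaType pX' →
        (∀ r : ℕ, prRankX pX r = prRankX pX' r) →
        ∀ r s : ℕ, prRankXY pX pH r s = prRankXY pX' pH r s) := by
  have h := unique_subspace_degradation_capacity_general q T M N hq pH hpH husd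
  exact ⟨h.1, fun pX pX' _ _ _ _ => h.2 pX pX'⟩

end
end
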